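/- Let p ∈ [1/2, 1). There exists a constant C > 0 such that for all n ≥ 1 and all x ≥ 0, the upper tail of the standardized binomial distribution is dominated by the Gaussian upper tail: Σ_{k : 0 ≤ k ≤ n, z_{n,k} > x} f_{n,k} ≤ C · ∫_x^∞ φ(t) dt. -/

import Mathlib

open MeasureTheory Filter

/-- The standard normal density. -/
noncomputable def normalPdf (x : ℝ) : ℝ := Real.exp (-x ^ 2 / 2) / Real.sqrt (2 * Real.pi)

/-- Binomial probabilities `f_{n,k} = (n choose k) p^k (1-p)^(n-k)`. -/
noncomputable def binProb (p : ℝ) (n k : ℕ) : ℝ := (n.choose k : ℝ) * p ^ k * (1 - p) ^ (n - k)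

/-- Standardized points `z_{n,k} = (k - np)/√(np(1-p))` (also used for `k = n+1`, `k = -1`). -/
noncomputable def zpt (p : ℝ) (n : ℕ) (k : ℤ) : ℝ :=
  ((k : ℝ) - n * p) / Real.sqrt (n * p * (1 - p))



lemma aux_one_sub (u : ℝ) (h0 : 0 ≤ u) (h1 : u < 1) : 1 - u ≤ Real.exp (-u - u ^ 2 / 2) := by
  have h := Real.hasSum_pow_div_log_of_abs_lt_one (x := u) (by rw [abs_of_nonneg h0]; exact h1)
  have h2 := sum_le_hasSum (Finset.range 2) (fun i _ => by positivity) h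
  simp [Finset.sum_range_succ] at h2
  rw [← Real.log_le_iff_le_exp (by linarith)]
  norm_num at h2
  linarith

lemma aux_one_add (v : ℝ) (h0 : 0 ≤ v) : Real.exp (v - v ^ 2 / 2) ≤ 1 + v := by
  rw [← Real.le_log_iff_exp_le (by linarith)]
  refine le_trans ?_ (Real.le_log_one_add_of_nonneg h0)
  rw [le_div_iff₀ (by linarith)]
  nlinarith [pow_nonneg h0 3]

lemma binProb_nonneg' (p : ℝ) (h0 : 0 ≤ p) (h1 : p ≤ 1) (n k : ℕ) : 0 ≤ binProb p n k := by
  have : 0 ≤ 1 - p := by linarith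
  unfold binProb; positivity

lemma binProb_sum (p : ℝ) (n : ℕ) : ∑ k ∈ Finset.range (n + 1), binProb p n k = 1 := by
  have h := add_pow p (1 - p) n
  rw [add_sub_cancel, one_pow] at h
  rw [h]
  refine Finset.sum_congr rfl fun k _ => ?_
  unfold binProb; ring

lemma binProb_succ (p : ℝ) (n k : ℕ) (hk : k < n) :
    binProb p n (k + 1) * ((k + 1) * (1 - p)) = binProb p n k * ((n - k) * p) := by
  unfold binProb
  have h := Nat.choose_succ_right_eq n k
  have h' : (n.choose (k + 1) : ℝ) * (k + 1) = n.choose k * (n - k) := by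
    have := congrArg (Nat.cast : ℕ → ℝ) h
    push_cast [Nat.cast_sub hk.le] at this
    exact this
  obtain ⟨d, rfl⟩ := Nat.exists_eq_add_of_lt hk
  have e1 : k + d + 1 - (k + 1) = d := by omega
  have e2 : k + d + 1 - k = d + 1 := by omega
  rw [e1, e2]
  calc _ = ((k + d + 1).choose (k + 1) * (k + 1) : ℝ) * (p ^ (k + 1) * (1 - p) ^ (d + 1)) := by ring
    _ = _ := by rw [h']; ring

lemma binProb_anti (p : ℝ) (h0 : 0 < p) (h1 : p < 1) (n k : ℕ) (hk : k < n) (hy : n * p ≤ k) :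
    binProb p n (k + 1) ≤ binProb p n k := by
  have h := binProb_succ p n k hk
  have hq : 0 < 1 - p := by linarith
  have hb := binProb_nonneg' p h0.le h1.le n k
  have hpos : 0 < ((k : ℝ) + 1) * (1 - p) := by positivity
  refine le_of_mul_le_mul_right ?_ hpos
  rw [h]
  refine mul_le_mul_of_nonneg_left ?_ hb
  nlinarith

lemma binProb_anti' (p : ℝ) (h0 : 0 < p) (h1 : p < 1) (n m k : ℕ) (hmk : m ≤ k) (hy : n * p ≤ m)
    (hk : k ≤ n) : binProb p n k ≤ binProb p n m := by
  induction k, hmk using Nat.le_induction with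
  | base => exact le_rfl
  | succ k hmk ih =>
    refine le_trans (binProb_anti p h0 h1 n k (by omega) ?_) (ih (by omega))
    have : (m : ℝ) ≤ k := by exact_mod_cast hmk
    linarith

/-- One step of the comparison with the Gaussian. -/
lemma binProb_step (p : ℝ) (hp : 1 / 2 ≤ p) (h1 : p < 1) (n k : ℕ) (hk : k < n) (hy : n * p ≤ k)
    (hs : n * p * (1 - p) ≤ ((k : ℝ) - n * p) ^ 2) :
    binProb p n (k + 1) ≤ binProb p n k *
      Real.exp (-(2 * ((k : ℝ) - n * p) + 1) / (2 * (n * p * (1 - p))) + 6 / n) := by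
  have h := binProb_succ p n k hk
  have h0 : 0 < p := by linarith
  obtain ⟨q, hq'⟩ : ∃ q, q = 1 - p := ⟨_, rfl⟩
  rw [← hq'] at h hs ⊢
  have hq : 0 < q := by linarith
  have hp' : p = 1 - q := by linarith
  have hb := binProb_nonneg' p h0.le h1.le n k
  have hpos : 0 < ((k : ℝ) + 1) * q := by positivity
  have hkn : (k : ℝ) + 1 ≤ n := by exact_mod_cast hk
  have hn1 : (1 : ℝ) ≤ n := by have : (0 : ℝ) ≤ k := by positivity
                               linarith
  have hn : (0 : ℝ) < n := by linarith
  obtain ⟨y, hyd⟩ : ∃ y, y = (k : ℝ) - n * p := ⟨_, rfl⟩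
  rw [← hyd] at hs ⊢
  have hy0 : 0 ≤ y := by linarith
  refine le_of_mul_le_mul_right ?_ hpos
  rw [h, mul_assoc]
  refine mul_le_mul_of_nonneg_left ?_ hb
  have hu : y / (n * q) < 1 := by
    rw [div_lt_one (by positivity)]; subst hq'; nlinarith
  have a1 := aux_one_sub (y / (n * q)) (by positivity) hu
  have a2 := aux_one_add ((y + 1) / (n * p)) (by positivity)
  have e1 : ((n : ℝ) - k) * p = n * p * q * (1 - y / (n * q)) := by
    have : (k : ℝ) = y + n * p := by linarith
    rw [this]; field_simp; rw [hq']; ring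
  have e2 : ((k : ℝ) + 1) * q = n * p * q * (1 + (y + 1) / (n * p)) := by
    have : (k : ℝ) = y + n * p := by linarith
    rw [this]; field_simp; ring
  rw [e1, e2]
  set E := -(2 * y + 1) / (2 * (n * p * q)) + 6 / n with hE
  have key : -(y / (n * q)) - (y / (n * q)) ^ 2 / 2 ≤
      E + ((y + 1) / (n * p) - ((y + 1) / (n * p)) ^ 2 / 2) := by
    rw [← sub_nonneg]
    have : E + ((y + 1) / (n * p) - ((y + 1) / (n * p)) ^ 2 / 2) -
      (-(y / (n * q)) - (y / (n * q)) ^ 2 / 2) =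
      ((y ^ 2 - n * p * q) * (p - q) + (12 * n * p ^ 2 - (2 * y + 1)) * q ^ 2) /
        (2 * n ^ 2 * p ^ 2 * q ^ 2) := by
      rw [hE]; field_simp; rw [hp']; ring
    rw [this]
    refine div_nonneg (add_nonneg (mul_nonneg (by linarith) (by linarith))
      (mul_nonneg ?_ (by positivity))) (by positivity)
    have : 1 / 4 ≤ p ^ 2 := by nlinarith
    have : y ≤ n := by nlinarith
    nlinarith
  calc n * p * q * (1 - y / (n * q)) ≤
        n * p * q * (Real.exp E * Real.exp ((y + 1) / (n * p) - ((y + 1) / (n * p)) ^ 2 / 2)) := by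
        refine mul_le_mul_of_nonneg_left ?_ (by positivity)
        rw [← Real.exp_add]
        exact a1.trans (Real.exp_le_exp.2 key)
    _ ≤ n * p * q * (Real.exp E * (1 + (y + 1) / (n * p))) := by gcongr
    _ = _ := by ring

/-- Iterated comparison. -/
lemma binProb_iter (p : ℝ) (hp : 1 / 2 ≤ p) (h1 : p < 1) (n m k : ℕ) (hmk : m ≤ k) (hk : k ≤ n)
    (hm : n * p + Real.sqrt (n * p * (1 - p)) ≤ m) :
    binProb p n k ≤ binProb p n m *
      Real.exp ((((m : ℝ) - n * p) ^ 2 - ((k : ℝ) - n * p) ^ 2) / (2 * (n * p * (1 - p)))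
        + 6 * (k - m) / n) := by
  have h0 : 0 < p := by linarith
  have hq : 0 ≤ 1 - p := by linarith
  induction k, hmk using Nat.le_induction with
  | base => simp
  | succ k hmk ih =>
    have hmk' : (m : ℝ) ≤ k := by exact_mod_cast hmk
    have hs := Real.sqrt_nonneg (n * p * (1 - p))
    have hsq := Real.sq_sqrt (show 0 ≤ n * p * (1 - p) by positivity)
    have st := binProb_step p hp h1 n k (by omega) (by linarith) (by
      rw [← hsq]
      exact pow_le_pow_left₀ hs (by linarith) 2)
    refine st.trans ((mul_le_mul_of_nonneg_right (ih (by omega)) (Real.exp_nonneg _)).trans ?_)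
    rw [mul_assoc, ← Real.exp_add]
    refine le_of_eq ?_
    congr 2
    push_cast
    ring

lemma binProb_base (p : ℝ) (h0 : 0 < p) (h1 : p < 1) (n m : ℕ) (hk : m ≤ n)
    (hm : n * p + Real.sqrt (n * p * (1 - p)) ≤ m) :
    binProb p n m * Real.sqrt (n * p * (1 - p)) ≤ 1 := by
  have hs := Real.sqrt_nonneg (n * p * (1 - p))
  set s := Real.sqrt (n * p * (1 - p))
  have hc : n * p ≤ ⌈(n * p : ℝ)⌉₊ := Nat.le_ceil _
  have hc2 : (⌈(n * p : ℝ)⌉₊ : ℝ) < n * p + 1 := Nat.ceil_lt_add_one (by positivity)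
  have hcm : ⌈(n * p : ℝ)⌉₊ ≤ m := Nat.ceil_le.2 (by linarith)
  set c := ⌈(n * p : ℝ)⌉₊
  have hb := binProb_nonneg' p h0.le h1.le n
  calc binProb p n m * s ≤ binProb p n m * ((m + 1 - c : ℕ) : ℝ) := by
        refine mul_le_mul_of_nonneg_left ?_ (hb m)
        push_cast [Nat.cast_sub (show c ≤ m + 1 by omega)]
        linarith
    _ = ∑ k ∈ Finset.Ico c (m + 1), binProb p n m := by simp [mul_comm]
    _ ≤ ∑ k ∈ Finset.Ico c (m + 1), binProb p n k := by
        refine Finset.sum_le_sum fun k hkm => ?_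
        rw [Finset.mem_Ico] at hkm
        refine binProb_anti' p h0 h1 n k m (by omega) ?_ hk
        have : (c : ℝ) ≤ k := by exact_mod_cast hkm.1
        linarith
    _ ≤ ∑ k ∈ Finset.range (n + 1), binProb p n k := by
        refine Finset.sum_le_sum_of_subset_of_nonneg ?_ fun k _ _ => hb k
        intro k hkm
        rw [Finset.mem_Ico] at hkm
        rw [Finset.mem_range]; omega
    _ = 1 := binProb_sum p n

lemma normalPdf_integrable : Integrable normalPdf := by
  have h := integrable_exp_neg_mul_sq (b := 1 / 2) (by norm_num)
  have := h.div_const (Real.sqrt (2 * Real.pi))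
  refine this.congr (Eventually.of_forall fun x => ?_)
  simp only [normalPdf]
  congr 2
  ring

lemma normalPdf_pos (x : ℝ) : 0 < normalPdf x := by unfold normalPdf; positivity

lemma tail_pos (x : ℝ) : 0 < ∫ t in Set.Ioi x, normalPdf t := by
  rw [setIntegral_pos_iff_support_of_nonneg_ae
    (Eventually.of_forall fun t => (normalPdf_pos t).le) normalPdf_integrable.integrableOn]
  have : Function.support normalPdf = Set.univ := by
    ext t; simp [(normalPdf_pos t).ne']
  rw [this]; simp

lemma tail_mono {S T : Set ℝ} (h : S ⊆ T) :
    ∫ t in S, normalPdf t ≤ ∫ t in T, normalPdf t :=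
  setIntegral_mono_set normalPdf_integrable.integrableOn
    (Eventually.of_forall fun t => (normalPdf_pos t).le) (Eventually.of_forall h)

lemma Ioc_lower (a b : ℝ) (ha : 0 ≤ a) (hab : a ≤ b) :
    (b - a) * normalPdf b ≤ ∫ t in Set.Ioc a b, normalPdf t := by
  have h : ∫ t in Set.Ioc a b, normalPdf b ≤ ∫ t in Set.Ioc a b, normalPdf t := by
    refine setIntegral_mono_on (integrableOn_const (by simp))
      normalPdf_integrable.integrableOn measurableSet_Ioc fun t ht => ?_
    unfold normalPdf
    have : t ^ 2 ≤ b ^ 2 := pow_le_pow_left₀ (by linarith [ht.1]) ht.2 2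
    gcongr
  simpa [hab] using h

lemma zpt_sq (p : ℝ) (h0 : 0 < p) (h1 : p < 1) (n : ℕ) (k : ℤ) :
    zpt p n k ^ 2 = ((k : ℝ) - n * p) ^ 2 / (n * p * (1 - p)) := by
  have : 0 ≤ 1 - p := by linarith
  unfold zpt
  rw [div_pow, Real.sq_sqrt (by positivity)]

lemma binProb_le_integral (p : ℝ) (hp : 1 / 2 ≤ p) (h1 : p < 1) (n k : ℕ) (hn : 1 ≤ n)
    (hk : k ≤ n) (hz : 1 ≤ zpt p n k) :
    binProb p n k ≤ (Real.sqrt (2 * Real.pi) *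
      Real.exp ((1 + 1 / Real.sqrt (p * (1 - p))) ^ 2 / 2 + 6 + 3 / (2 * (p * (1 - p))))) *
      ∫ t in Set.Ioc (zpt p n k) (zpt p n (k + 1 : ℕ)), normalPdf t := by
  have h0 : 0 < p := by linarith
  have hq : 0 < 1 - p := by linarith
  have hn1 : (1 : ℝ) ≤ n := by exact_mod_cast hn
  have hn0 : (0 : ℝ) < n := by linarith
  have hpq : 0 < p * (1 - p) := by positivity
  have hv : 0 < n * p * (1 - p) := by positivity
  have hs : 0 < Real.sqrt (n * p * (1 - p)) := Real.sqrt_pos.2 hv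
  have hr : 0 < Real.sqrt (p * (1 - p)) := Real.sqrt_pos.2 hpq
  have hrs : Real.sqrt (p * (1 - p)) ≤ Real.sqrt (n * p * (1 - p)) :=
    Real.sqrt_le_sqrt (by nlinarith)
  have hsq : Real.sqrt (n * p * (1 - p)) ^ 2 = n * p * (1 - p) := Real.sq_sqrt hv.le
  have hkz : n * p + Real.sqrt (n * p * (1 - p)) ≤ k := by
    unfold zpt at hz
    rw [le_div_iff₀ hs] at hz
    push_cast at hz
    linarith
  have hmk : ⌈n * p + Real.sqrt (n * p * (1 - p))⌉₊ ≤ k := Nat.ceil_le.2 hkz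
  have hm : n * p + Real.sqrt (n * p * (1 - p)) ≤ ⌈n * p + Real.sqrt (n * p * (1 - p))⌉₊ :=
    Nat.le_ceil _
  have hm2 : (⌈n * p + Real.sqrt (n * p * (1 - p))⌉₊ : ℝ) <
    n * p + Real.sqrt (n * p * (1 - p)) + 1 := Nat.ceil_lt_add_one (by positivity)
  set m := ⌈n * p + Real.sqrt (n * p * (1 - p))⌉₊
  have hit := binProb_iter p hp h1 n m k hmk hk hm
  have hba := binProb_base p h0 h1 n m (hmk.trans hk) hm
  have hz1 : zpt p n (k + 1 : ℕ) - zpt p n k = 1 / Real.sqrt (n * p * (1 - p)) := by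
    unfold zpt; push_cast; ring
  have hlow := Ioc_lower (zpt p n k) (zpt p n (k + 1 : ℕ)) (by linarith) (by
    have : 0 < 1 / Real.sqrt (n * p * (1 - p)) := by positivity
    linarith)
  rw [hz1] at hlow
  have hkn : (k : ℝ) ≤ n := by exact_mod_cast hk
  have hm0 : (0 : ℝ) ≤ m := by positivity
  set s := Real.sqrt (n * p * (1 - p))
  set r := Real.sqrt (p * (1 - p))
  have hba' : binProb p n m ≤ 1 / s := by rwa [le_div_iff₀ hs]
  -- exponent comparison
  have b1 : ((m : ℝ) - n * p) ^ 2 / (2 * (n * p * (1 - p))) ≤ (1 + 1 / r) ^ 2 / 2 := by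
    rw [← hsq]
    have : ((m : ℝ) - n * p) ^ 2 / (2 * s ^ 2) = (((m : ℝ) - n * p) / s) ^ 2 / 2 := by
      field_simp
    rw [this]
    have h2 : ((m : ℝ) - n * p) / s ≤ 1 + 1 / r := by
      have h3 : ((m : ℝ) - n * p) / s ≤ (s + 1) / s := by gcongr; linarith
      have h4 : (s + 1) / s = 1 + 1 / s := by field_simp
      have h5 : 1 / s ≤ 1 / r := by gcongr
      linarith
    have h6 : 0 ≤ ((m : ℝ) - n * p) / s := div_nonneg (by linarith) hs.le
    gcongr
  have b2 : 6 * ((k : ℝ) - m) / n ≤ 6 := by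
    rw [div_le_iff₀ hn0]; linarith
  have b3 : (2 * ((k : ℝ) - n * p) + 1) / (2 * (n * p * (1 - p))) ≤ 3 / (2 * (p * (1 - p))) := by
    rw [div_le_div_iff₀ (by positivity) (by positivity)]
    have : 2 * ((k : ℝ) - n * p) + 1 ≤ 3 * n := by nlinarith
    nlinarith
  have hpdf : normalPdf (zpt p n (k + 1 : ℕ)) = Real.exp (-(((k : ℝ) - n * p) ^ 2 /
      (2 * (n * p * (1 - p))) + (2 * ((k : ℝ) - n * p) + 1) / (2 * (n * p * (1 - p))))) /
      Real.sqrt (2 * Real.pi) := by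
    unfold normalPdf
    rw [zpt_sq p h0 h1]
    congr 2
    push_cast
    field_simp
    ring
  set E := (1 + 1 / r) ^ 2 / 2 + 6 + 3 / (2 * (p * (1 - p))) with hE
  have h2pi : 0 < Real.sqrt (2 * Real.pi) := by positivity
  calc binProb p n k ≤ _ := hit
    _ ≤ (1 / s) * Real.exp (E + -(((k : ℝ) - n * p) ^ 2 /
      (2 * (n * p * (1 - p))) + (2 * ((k : ℝ) - n * p) + 1) / (2 * (n * p * (1 - p))))) := by
        refine mul_le_mul hba' (Real.exp_le_exp.2 ?_) (Real.exp_nonneg _) (by positivity)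
        rw [sub_div]
        linarith
    _ = (Real.sqrt (2 * Real.pi) * Real.exp E) *
        (1 / s * normalPdf (zpt p n (k + 1 : ℕ))) := by
        rw [hpdf, Real.exp_add]; field_simp
    _ ≤ _ := mul_le_mul_of_nonneg_left hlow (by positivity)

theorem binomial_upper_tail_gaussian_domination
    (p : ℝ) (hp : p ∈ Set.Ico (1 / 2 : ℝ) 1) :
    ∃ C > (0 : ℝ), ∀ n : ℕ, 1 ≤ n → ∀ x : ℝ, 0 ≤ x →
      ∑ k ∈ (Finset.range (n + 1)).filter (fun k : ℕ => x < zpt p n k), binProb p n k ≤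
        C * ∫ t in Set.Ioi x, normalPdf t := by
  obtain ⟨hp, h1⟩ := hp
  have h0 : 0 < p := by linarith
  set K := Real.sqrt (2 * Real.pi) *
      Real.exp ((1 + 1 / Real.sqrt (p * (1 - p))) ^ 2 / 2 + 6 + 3 / (2 * (p * (1 - p)))) with hK
  have hKpos : 0 < K := by positivity
  have hT1 := tail_pos 1
  refine ⟨K + 1 / ∫ t in Set.Ioi (1 : ℝ), normalPdf t, by positivity, fun n hn x hx => ?_⟩
  have hTx := tail_pos x
  rw [add_mul]
  rcases lt_or_ge x 1 with hx1 | hx1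
  · have a1 : ∑ k ∈ (Finset.range (n + 1)).filter (fun k : ℕ => x < zpt p n k), binProb p n k
        ≤ 1 := by
      rw [← binProb_sum p n]
      exact Finset.sum_le_sum_of_subset_of_nonneg (Finset.filter_subset _ _)
        fun k _ _ => binProb_nonneg' p h0.le h1.le n k
    have a2 : 1 ≤ (1 / ∫ t in Set.Ioi (1 : ℝ), normalPdf t) * ∫ t in Set.Ioi x, normalPdf t := by
      rw [one_div_mul_eq_div, one_le_div hT1]
      exact tail_mono (Set.Ioi_subset_Ioi hx1.le)
    have a3 : 0 < K * ∫ t in Set.Ioi x, normalPdf t := by positivity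
    linarith
  · have a3 : 0 < (1 / ∫ t in Set.Ioi (1 : ℝ), normalPdf t) * ∫ t in Set.Ioi x, normalPdf t := by
      positivity
    refine le_trans ?_ (le_add_of_nonneg_right a3.le)
    have hmono : Monotone (fun k : ℕ => zpt p n k) := by
      intro a b hab
      have : (a : ℝ) ≤ b := by exact_mod_cast hab
      simp only [zpt, Int.cast_natCast]
      gcongr
    set F := (Finset.range (n + 1)).filter (fun k : ℕ => x < zpt p n k)
    calc ∑ k ∈ F, binProb p n k
        ≤ ∑ k ∈ F, K * ∫ t in Set.Ioc (zpt p n k) (zpt p n (k + 1 : ℕ)), normalPdf t := by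
          refine Finset.sum_le_sum fun k hk => ?_
          rw [Finset.mem_filter, Finset.mem_range] at hk
          exact binProb_le_integral p hp h1 n k hn (by omega) (by linarith [hk.2])
      _ = K * ∫ t in ⋃ k ∈ F, Set.Ioc (zpt p n k) (zpt p n (k + 1 : ℕ)), normalPdf t := by
          rw [← Finset.mul_sum, integral_biUnion_finset]
          · exact fun _ _ => measurableSet_Ioc
          · exact (hmono.pairwise_disjoint_on_Ioc_succ).set_pairwise _
          · exact fun _ _ => normalPdf_integrable.integrableOn
      _ ≤ _ := by
          refine mul_le_mul_of_nonneg_left (tail_mono ?_) hKpos.le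
          refine Set.iUnion₂_subset fun k hk t ht => ?_
          rw [Finset.mem_filter] at hk
          exact hk.2.trans ht.1
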